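/- Let K be a field, n ≥ 2, and 1 ≤ m ≤ n − 1. Let A, B ∈ GL(n, K) be cyclic matrices, and let P₁ ∈ GL(m, K), P₂ ∈ GL(n−m, K) satisfy det P₁ · det P₂ = det A · det B. Then there exist a matrix C ∈ M(m × (n−m), K) and X, Y ∈ GL(n, K) such that the block upper triangular matrix [[P₁, C], [0, P₂]] equals (X A X⁻¹) · (Y B Y⁻¹). -/

import Mathlib

open Matrix Polynomial

noncomputable section

/-- A matrix is cyclic if its characteristic polynomial equals its minimal polynomial. -/
def IsCyclicMat {ι : Type*} [Fintype ι] [DecidableEq ι] {K : Type*} [Field K]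
    (A : Matrix ι ι K) : Prop :=
  A.charpoly = minpoly K A

/-- A matrix is nonprimary if its characteristic polynomial is a product of two
coprime nonconstant monic polynomials. -/
def IsNonprimary {ι : Type*} [Fintype ι] [DecidableEq ι] {K : Type*} [Field K]
    (M : Matrix ι ι K) : Prop :=
  ∃ f g : Polynomial K, f.Monic ∧ g.Monic ∧ 0 < f.natDegree ∧ 0 < g.natDegree ∧
    IsCoprime f g ∧ M.charpoly = f * g

/-- A transvection: `T ≠ 1`, `(T - 1)² = 0` and `rank (T - 1) = 1`. -/
def IsTransvection {ι : Type*} [Fintype ι] [DecidableEq ι] {K : Type*} [Field K]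
    (T : Matrix ι ι K) : Prop :=
  T ≠ 1 ∧ (T - 1) * (T - 1) = 0 ∧ (T - 1).rank = 1

/-!
Let `c` be the cyclic permutation matrix running through all indices. Conjugate `P₁` and `P₂` to
products `U₁ L₁` and `U₂ L₂` of an upper and a lower triangular matrix, scaled so that
`det U₁ det U₂ = ± det A`. It suffices that `A` is conjugate to `[[U₁, V], [0, U₂]] c` for some `V`:
by transposition `B` is then conjugate to `c⁻¹ [[L₁, W], [0, L₂]]` for some `W`, and in the product
of these two conjugates `c` cancels, leaving the diagonal blocks `U₁ L₁` and `U₂ L₂`.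

For `A` we look for a basis `fⱼ(A) v`, where `v` is a cyclic vector. The required matrix entries
become congruences between the polynomials `fⱼ` modulo the characteristic polynomial of `A`. They
are solved forwards from `1` in the first block, so that `fⱼ` has degree `j` there, and backwards
from an inverse of `X` by dropping constant terms in the second block. The free block `V` absorbs
every discrepancy of small degree, and the one coefficient it cannot reach agrees by the condition
on determinants.
-/

section CyclicVectors

variable {ι R K : Type*} [CommRing R] [Field K] [Fintype ι] [DecidableEq ι]

/-- `v` is a cyclic vector of `A`: its images under the polynomials in `A` exhaust the space. -/
def IsCyclicVector (A : Matrix ι ι K) (v : ι → K) : Prop :=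
  ∀ w, ∃ f : K[X], aeval A f *ᵥ v = w

theorem exists_forall_minpoly_dvd_of_aeval_mulVec_eq_zero (A : Matrix ι ι K) :
    ∃ v : ι → K, ∀ f : K[X], aeval A f *ᵥ v = 0 → minpoly K A ∣ f := by
  let φ := toLin' A
  obtain ⟨x, hx⟩ := Module.exists_ker_toSpanSingleton_eq_annihilator K[X] (Module.AEval' φ)
  refine ⟨(Module.AEval'.of φ).symm x, fun f hf ↦ ?_⟩
  have h_apply : aeval φ f ((Module.AEval'.of φ).symm x) = 0 := by
    rw [← hf, ← toLin'_apply]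
    exact LinearMap.congr_fun (aeval_algHom_apply toLinAlgEquiv'.toAlgHom A f) _
  have h_ann : f ∈ Module.annihilator K[X] (Module.AEval' φ) := by
    rw [← hx, LinearMap.mem_ker, LinearMap.toSpanSingleton_apply]
    apply (Module.AEval'.of φ).symm.injective
    rw [map_zero, ← h_apply]
    exact Module.AEval.of_symm_smul (a := φ) f x
  rwa [← span_minpoly_eq_annihilator, Ideal.mem_span_singleton, minpoly_toLin'] at h_ann

theorem IsCyclicMat.exists_isCyclicVector {A : Matrix ι ι K} (hA : IsCyclicMat A) :
    ∃ v, IsCyclicVector A v := by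
  obtain ⟨v, hv⟩ := exists_forall_minpoly_dvd_of_aeval_mulVec_eq_zero A
  let evalAt : degreeLT K (Fintype.card ι) →ₗ[K] ι → K :=
    (mulVecBilin K K).flip v ∘ₗ (aeval A).toLinearMap ∘ₗ (degreeLT K _).subtype
  have h_injective : Function.Injective evalAt := by
    refine (injective_iff_map_eq_zero _).2 fun f hf ↦ Subtype.ext ?_
    refine eq_zero_of_dvd_of_degree_lt (hv f hf) ?_
    rw [← show A.charpoly = _ from hA, charpoly_degree_eq_dim]
    exact mem_degreeLT.1 f.2
  have h_surjective : Function.Surjective evalAt :=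
    (LinearMap.injective_iff_surjective_of_finrank_eq_finrank
      (by rw [(degreeLTEquiv K _).finrank_eq]; simp)).1 h_injective
  exact ⟨v, fun w ↦ (h_surjective w).imp' Subtype.val fun _ ↦ id⟩

theorem aeval_mul_eq_mul_aeval {A M Y : Matrix ι ι R} (h : A * Y = Y * M) (f : R[X]) :
    aeval A f * Y = Y * aeval M f := by
  induction f using Polynomial.induction_on' with
  | add f g hf hg => rw [map_add, map_add, add_mul, mul_add, hf, hg]
  | monomial d a =>
    have h_pow : A ^ d * Y = Y * M ^ d :=
      (SemiconjBy.pow_right (show SemiconjBy Y M A from h.symm) d).symm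
    rw [aeval_monomial, aeval_monomial, mul_assoc, h_pow, ← mul_assoc, Algebra.commutes, mul_assoc]

theorem IsCyclicVector.isConj {A M Y : Matrix ι ι K} {v u : ι → K} (hv : IsCyclicVector A v)
    (hY : A * Y = Y * M) (hu : Y *ᵥ u = v) : IsConj A M := by
  have h_surjective : Function.Surjective Y.mulVec := fun w ↦ by
    obtain ⟨f, rfl⟩ := hv w
    exact ⟨aeval M f *ᵥ u, by rw [← hu, mulVec_mulVec, mulVec_mulVec, aeval_mul_eq_mul_aeval hY]⟩
  obtain ⟨c, rfl⟩ := mulVec_surjective_iff_isUnit.1 h_surjective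
  exact IsConj.symm ⟨c, hY.symm⟩

theorem aeval_transpose (A : Matrix ι ι R) (f : R[X]) : aeval Aᵀ f = (aeval A f)ᵀ := by
  induction f using Polynomial.induction_on' with
  | add f g hf hg => rw [map_add, map_add, hf, hg, transpose_add]
  | monomial d a =>
    simp only [aeval_monomial, Algebra.algebraMap_eq_smul_one, smul_mul_assoc, one_mul,
      transpose_smul, transpose_pow]

theorem minpoly_transpose_dvd (A : Matrix ι ι K) : minpoly K Aᵀ ∣ minpoly K A :=
  minpoly.dvd K _ (by rw [aeval_transpose, minpoly.aeval, transpose_zero])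

theorem minpoly_transpose (A : Matrix ι ι K) : minpoly K Aᵀ = minpoly K A :=
  eq_of_monic_of_associated (minpoly.monic (isIntegral _)) (minpoly.monic (isIntegral _))
    (associated_of_dvd_dvd (minpoly_transpose_dvd A) (minpoly_transpose_dvd Aᵀ))

theorem IsCyclicMat.transpose {A : Matrix ι ι K} (hA : IsCyclicMat A) : IsCyclicMat Aᵀ := by
  rw [IsCyclicMat, charpoly_transpose, minpoly_transpose, hA]

theorem IsCyclicMat.reindex {κ : Type*} [Fintype κ] [DecidableEq κ] {A : Matrix ι ι K}
    (hA : IsCyclicMat A) (e : ι ≃ κ) : IsCyclicMat (Matrix.reindex e e A) := by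
  rw [IsCyclicMat, charpoly_reindex, hA]
  exact (minpoly.algEquiv_eq (reindexAlgEquiv K K e) A).symm

end CyclicVectors

section Conjugacy

variable {G R ι κ : Type*} [Monoid G] [CommRing R] [Fintype ι] [DecidableEq ι] [Fintype κ]
  [DecidableEq κ]

theorem isConj_mul_comm_of_isUnit {a : G} (ha : IsUnit a) (b : G) : IsConj (a * b) (b * a) :=
  IsConj.symm ⟨ha.unit, (mul_assoc a b a).symm⟩

theorem exists_isConj_mul_eq_of_isConj_mul {a b c : G} (h : IsConj (a * b) c) :
    ∃ a' b', IsConj a a' ∧ IsConj b b' ∧ a' * b' = c := by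
  obtain ⟨u, hu⟩ := h
  exact ⟨u * a * ↑u⁻¹, u * b * ↑u⁻¹, ⟨u, by simp [SemiconjBy, mul_assoc]⟩,
    ⟨u, by simp [SemiconjBy, mul_assoc]⟩, by
      simpa [mul_assoc] using congrArg (· * (↑u⁻¹ : G)) hu.eq⟩

theorem exists_isUnit_det_conj_eq_of_isConj {A B : Matrix ι ι R} (h : IsConj A B) :
    ∃ X : Matrix ι ι R, IsUnit X.det ∧ X * A * X⁻¹ = B := by
  obtain ⟨u, hu⟩ := h
  have hdet : IsUnit (u : Matrix ι ι R).det := (isUnit_iff_isUnit_det _).1 u.isUnit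
  exact ⟨u, hdet, by rw [hu.eq, mul_nonsing_inv_cancel_right _ _ hdet]⟩

theorem det_eq_of_isConj {A B : Matrix ι ι R} (h : IsConj A B) : A.det = B.det :=
  isConj_iff_eq.1 (detMonoidHom.map_isConj h)

theorem isConj_transpose {A B : Matrix ι ι R} (h : IsConj A B) : IsConj Aᵀ Bᵀ := by
  obtain ⟨u, hu⟩ := h
  refine IsConj.symm ⟨((isUnit_transpose _).2 u.isUnit).unit, ?_⟩
  simpa [SemiconjBy, transpose_mul] using congrArg transpose hu.eq.symm

theorem exists_isConj_fromBlocks {M₁ P₁ : Matrix ι ι R} {M₂ P₂ : Matrix κ κ R}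
    (h₁ : IsConj M₁ P₁) (h₂ : IsConj M₂ P₂) (E : Matrix ι κ R) :
    ∃ C, IsConj (fromBlocks M₁ E 0 M₂) (fromBlocks P₁ C 0 P₂) := by
  obtain ⟨u, hu⟩ := h₁
  obtain ⟨w, hw⟩ := h₂
  refine ⟨u.1 * E * w⁻¹.1, ⟨⟨fromBlocks u 0 0 w, fromBlocks u⁻¹.1 0 0 w⁻¹.1, ?_, ?_⟩, ?_⟩⟩
  · simp [fromBlocks_multiply]
  · simp [fromBlocks_multiply]
  · simp [SemiconjBy, fromBlocks_multiply, hu.eq, hw.eq]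

end Conjugacy

section TriangularFactorization

variable {R : Type*} {k : ℕ}

/-- The matrix with corner entry `a`, remaining first row `r`, remaining first column `c` and
complementary block `S`; it drives the elimination in `exists_isConj_lower_mul_upper`. -/
def bordered (a : R) (r c : Fin k → R) (S : Matrix (Fin k) (Fin k) R) :
    Matrix (Fin (k + 1)) (Fin (k + 1)) R :=
  of (Fin.cons (Fin.cons a r) fun i ↦ Fin.cons (c i) (S i))

theorem eq_bordered (P : Matrix (Fin (k + 1)) (Fin (k + 1)) R) :
    P = bordered (P 0 0) (fun j ↦ P 0 j.succ) (fun i ↦ P i.succ 0)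
      (P.submatrix Fin.succ Fin.succ) := by
  ext i j
  cases i using Fin.cases <;> cases j using Fin.cases <;> rfl

theorem bordered_mul_bordered [CommSemiring R] (a a' : R) (r r' c c' : Fin k → R)
    (S S' : Matrix (Fin k) (Fin k) R) :
    bordered a r c S * bordered a' r' c' S' =
      bordered (a * a' + r ⬝ᵥ c') (a • r' + r ᵥ* S') (a' • c + S *ᵥ c')
        (vecMulVec c r' + S * S') := by
  ext i j
  cases i using Fin.cases <;> cases j using Fin.cases <;>
    simp [bordered, mul_apply, Fin.sum_univ_succ, dotProduct, vecMul, mulVec, vecMulVec, mul_comm]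

theorem bordered_one [CommSemiring R] :
    bordered 1 0 0 1 = (1 : Matrix (Fin (k + 1)) (Fin (k + 1)) R) := by
  ext i j
  cases i using Fin.cases <;> cases j using Fin.cases <;>
    simp [bordered, one_apply, Fin.succ_ne_zero, (Fin.succ_ne_zero _).symm]

theorem isLowerTriangular_bordered [Zero R] {L : Matrix (Fin k) (Fin k) R}
    (hL : L.IsLowerTriangular) (a : R) (c : Fin k → R) :
    (bordered a 0 c L).IsLowerTriangular := by
  intro i j (hij : i < j)
  cases i using Fin.cases <;> cases j using Fin.cases
  · exact absurd hij (lt_irrefl _)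
  · rfl
  · exact absurd hij (Fin.not_lt_zero _)
  · exact hL (Fin.succ_lt_succ_iff.1 hij)

theorem isUpperTriangular_bordered [Zero R] {U : Matrix (Fin k) (Fin k) R}
    (hU : U.IsUpperTriangular) (a : R) (r : Fin k → R) :
    (bordered a r 0 U).IsUpperTriangular := by
  intro i j (hij : j < i)
  cases i using Fin.cases <;> cases j using Fin.cases
  · exact absurd hij (lt_irrefl _)
  · exact absurd hij (Fin.not_lt_zero _)
  · rfl
  · exact hU (Fin.succ_lt_succ_iff.1 hij)

theorem exists_isConj_bordered_of_isConj [CommRing R] {a : R} {r c : Fin k → R}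
    {S L U : Matrix (Fin k) (Fin k) R} (h : IsConj (S - vecMulVec c r) (L * U)) :
    ∃ r' c', IsConj (bordered a (a • r) c S) (bordered a 0 c' L * bordered 1 r' 0 U) := by
  obtain ⟨Q, hQ⟩ := h
  refine ⟨r ᵥ* Q⁻¹.1, Q.1 *ᵥ c, ⟨⟨bordered 1 0 0 Q.1, bordered 1 0 0 Q⁻¹.1, ?_, ?_⟩, ?_⟩⟩
  · simp [bordered_mul_bordered, bordered_one]
  · simp [bordered_mul_bordered, bordered_one]
  · have hS : Q.1 * S = vecMulVec (Q.1 *ᵥ c) r + L * U * Q.1 := by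
      rw [← hQ.eq, mul_sub, mul_vecMulVec, add_sub_cancel]
    simp [SemiconjBy, bordered_mul_bordered, hS, add_mul, vecMulVec_mul, smul_vecMul]

theorem exists_isConj_apply_self_ne_zero {ι : Type*} [Fintype ι] [DecidableEq ι] [CommRing R]
    {P : Matrix ι ι R} {i j : ι} (hP : P i j ≠ 0) : ∃ P', IsConj P P' ∧ P' i i ≠ 0 := by
  by_cases h_diag : P i i = 0
  · have hji : j ≠ i := by rintro rfl; exact hP h_diag
    have h_inv : transvection j i 1 * transvection j i (-1) = (1 : Matrix ι ι R) := by
      rw [transvection_mul_transvection_same _ _ hji, add_neg_cancel, transvection_zero]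
    have h_inv' : transvection j i (-1) * transvection j i 1 = (1 : Matrix ι ι R) := by
      rw [transvection_mul_transvection_same _ _ hji, neg_add_cancel, transvection_zero]
    refine ⟨transvection j i (-1) * (P * transvection j i 1),
      ⟨⟨_, _, h_inv', h_inv⟩, by simp [SemiconjBy, mul_assoc, h_inv]⟩, ?_⟩
    rwa [transvection_mul_apply_of_ne _ _ _ _ hji.symm, mul_transvection_apply_same, h_diag,
      one_mul, zero_add]
  · exact ⟨P, IsConj.refl P, h_diag⟩

variable {K : Type*} [Field K]

theorem exists_isConj_bordered_smul (P : Matrix (Fin (k + 1)) (Fin (k + 1)) K) :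
    ∃ (a : K) (r c : Fin k → K) (S : Matrix (Fin k) (Fin k) K),
      IsConj P (bordered a (a • r) c S) := by
  by_cases h_row : ∀ j, P 0 j = 0
  · refine ⟨0, 0, fun i ↦ P i.succ 0, P.submatrix Fin.succ Fin.succ, ?_⟩
    convert IsConj.refl P
    conv_rhs => rw [eq_bordered P]
    simp only [h_row, zero_smul]
    rfl
  · obtain ⟨j, hj⟩ := not_forall.1 h_row
    obtain ⟨P', hPP', hP'⟩ := exists_isConj_apply_self_ne_zero hj
    refine ⟨P' 0 0, (P' 0 0)⁻¹ • fun j ↦ P' 0 j.succ, fun i ↦ P' i.succ 0,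
      P'.submatrix Fin.succ Fin.succ, ?_⟩
    rwa [smul_inv_smul₀ hP', ← eq_bordered]

theorem exists_isConj_lower_mul_upper (P : Matrix (Fin k) (Fin k) K) :
    ∃ L U : Matrix (Fin k) (Fin k) K,
      L.IsLowerTriangular ∧ U.IsUpperTriangular ∧ IsConj P (L * U) := by
  induction k with
  | zero => exact ⟨1, 1, fun i ↦ i.elim0, fun i ↦ i.elim0, by rw [Subsingleton.elim P (1 * 1)]⟩
  | succ k ih =>
    obtain ⟨a, r, c, S, hP⟩ := exists_isConj_bordered_smul P
    obtain ⟨L, U, hL, hU, hLU⟩ := ih (S - vecMulVec c r)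
    obtain ⟨r', c', h⟩ := exists_isConj_bordered_of_isConj (a := a) hLU
    exact ⟨_, _, isLowerTriangular_bordered hL a c', isUpperTriangular_bordered hU 1 r',
      hP.trans h⟩

theorem exists_isConj_upper_mul_lower_det_eq {P : Matrix (Fin (k + 1)) (Fin (k + 1)) K}
    (hP : IsUnit P.det) {d : K} (hd : d ≠ 0) :
    ∃ U L : Matrix (Fin (k + 1)) (Fin (k + 1)) K,
      U.IsUpperTriangular ∧ L.IsLowerTriangular ∧ U.det = d ∧ IsConj (U * L) P := by
  obtain ⟨L, U, hL, hU, hLU⟩ := exists_isConj_lower_mul_upper P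
  rw [det_eq_of_isConj hLU, det_mul, IsUnit.mul_iff] at hP
  let D : K →* Matrix (Fin (k + 1)) (Fin (k + 1)) K :=
    (diagonalRingHom _ K).toMonoidHom.comp (MonoidHom.mulSingle (fun _ ↦ K) 0)
  have det_D (c : K) : (D c).det = c :=
    (det_diagonal ..).trans (Fintype.prod_pi_mulSingle' 0 c)
  have h_cancel : D (d / U.det) * D (U.det / d) = 1 := by
    rw [← map_mul, div_mul_div_cancel₀ hP.2.ne_zero, div_self hd, map_one]
  refine ⟨U * D (d / U.det), D (U.det / d) * L, hU.mul (blockTriangular_diagonal _),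
    BlockTriangular.mul (blockTriangular_diagonal _) hL, ?_, ?_⟩
  · rw [det_mul, det_D, mul_div_cancel₀ _ hP.2.ne_zero]
  · rw [mul_assoc, ← mul_assoc (D _), h_cancel, one_mul]
    have hL_unit : IsUnit L := (isUnit_iff_isUnit_det L).2 hP.1
    exact (isConj_mul_comm_of_isUnit hL_unit U).symm.trans hLU.symm

theorem exists_isConj_upper_mul_lower_pair_det_eq {l : ℕ}
    {P₁ : Matrix (Fin (k + 1)) (Fin (k + 1)) K} {P₂ : Matrix (Fin (l + 1)) (Fin (l + 1)) K}
    (hP₁ : IsUnit P₁.det) (hP₂ : IsUnit P₂.det) {a b : K} (hdet : P₁.det * P₂.det = a * b) :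
    ∃ (U₁ L₁ : Matrix (Fin (k + 1)) (Fin (k + 1)) K) (U₂ L₂ : Matrix (Fin (l + 1)) (Fin (l + 1)) K),
      U₁.IsUpperTriangular ∧ L₁.IsLowerTriangular ∧ U₂.IsUpperTriangular ∧ L₂.IsLowerTriangular ∧
      U₁.det * U₂.det = a ∧ L₁.det * L₂.det = b ∧ IsConj (U₁ * L₁) P₁ ∧ IsConj (U₂ * L₂) P₂ := by
  have ha : a ≠ 0 := left_ne_zero_of_mul (hdet ▸ (hP₁.mul hP₂).ne_zero)
  obtain ⟨U₁, L₁, hU₁, hL₁, hU₁_det, h₁⟩ := exists_isConj_upper_mul_lower_det_eq hP₁ one_ne_zero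
  obtain ⟨U₂, L₂, hU₂, hL₂, hU₂_det, h₂⟩ := exists_isConj_upper_mul_lower_det_eq hP₂ ha
  refine ⟨U₁, L₁, U₂, L₂, hU₁, hL₁, hU₂, hL₂, by rw [hU₁_det, hU₂_det, one_mul], ?_, h₁, h₂⟩
  refine mul_left_cancel₀ ha ?_
  rw [← hdet, ← det_eq_of_isConj h₁, ← det_eq_of_isConj h₂, det_mul, det_mul, hU₁_det, hU₂_det,
    one_mul, mul_left_comm]

end TriangularFactorization

section TriangularPolynomialSystems

variable {R : Type*} [CommRing R] {ι κ : Type*} [Fintype ι] {n p q : ℕ}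

theorem coeff_vecMul_map_C (f : ι → R[X]) (U : Matrix ι κ R) (j : κ) (m : ℕ) :
    ((f ᵥ* U.map C) j).coeff m = ∑ i, (f i).coeff m * U i j := by
  simp only [vecMul, dotProduct, map_apply, finsetSum_coeff, coeff_mul_C]

theorem divX_vecMul_map_C (f : ι → R[X]) (U : Matrix ι κ R) (j : κ) :
    divX ((f ᵥ* U.map C) j) = ((fun i ↦ divX (f i)) ᵥ* U.map C) j := by
  ext m
  simp only [coeff_divX, coeff_vecMul_map_C]

theorem coeff_vecMul_map_C_of_isUpperTriangular {U : Matrix (Fin n) (Fin n) R}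
    (hU : U.IsUpperTriangular) {f : Fin n → R[X]} {d : ℕ} (hf : ∀ j, (f j).natDegree ≤ d + j)
    {j : Fin n} {m : ℕ} (hm : d + j ≤ m) :
    ((f ᵥ* U.map C) j).coeff m = (f j).coeff m * U j j := by
  rw [coeff_vecMul_map_C]
  refine Fintype.sum_eq_single j fun i hij ↦ ?_
  rcases hij.lt_or_gt with h | h
  · rw [coeff_eq_zero_of_natDegree_lt ((hf i).trans_lt (by omega)), zero_mul]
  · rw [hU h, mul_zero]

theorem natDegree_vecMul_map_C_le {U : Matrix (Fin n) (Fin n) R} (hU : U.IsUpperTriangular)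
    {f : Fin n → R[X]} {d : ℕ} (hf : ∀ j, (f j).natDegree ≤ d + j) (j : Fin n) :
    ((f ᵥ* U.map C) j).natDegree ≤ d + j :=
  natDegree_le_iff_coeff_eq_zero.2 fun m hm ↦ by
    rw [coeff_vecMul_map_C_of_isUpperTriangular hU hf hm.le,
      coeff_eq_zero_of_natDegree_lt ((hf j).trans_lt hm), zero_mul]

theorem mul_eq_mul_prod_of_castSucc_eq {M : Type*} [CommMonoid M] {n : ℕ} {a d : Fin (n + 1) → M}
    (h : ∀ i : Fin n, a i.castSucc = a i.succ * d i.succ) :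
    a 0 * d 0 = a (Fin.last n) * ∏ i, d i := by
  induction n with
  | zero => simp
  | succ n ih =>
    have ih' := ih (a := fun i ↦ a i.castSucc) (d := fun i ↦ d i.castSucc) fun i ↦ h i.castSucc
    rw [Fin.prod_univ_castSucc, mul_left_comm, ← Fin.succ_last, ← h, mul_comm (∏ _, _)]
    exact ih'

theorem exists_vecMul_eq_cons_one {K : Type*} [Field K] {U : Matrix (Fin (p + 1)) (Fin (p + 1)) K}
    (hU : U.IsUpperTriangular) (hU_det : U.det ≠ 0) :
    ∃ f : Fin (p + 1) → K[X], (∀ i, (f i).natDegree ≤ i) ∧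
      f ᵥ* U.map C = Fin.cons 1 fun i ↦ X * f i.castSucc := by
  have h_diag : ∀ i, U i i ≠ 0 := by
    simpa [det_of_isUpperTriangular hU, Finset.prod_ne_zero_iff] using hU_det
  clear hU_det
  induction p with
  | zero =>
    refine ⟨fun _ ↦ C (U 0 0)⁻¹, fun i ↦ by simp, ?_⟩
    ext1 j
    rw [Fin.fin_one_eq_zero j]
    simp only [vecMul, dotProduct, Fin.sum_univ_succ, map_apply, Fin.cons_zero, ← C_mul,
      inv_mul_cancel₀ (h_diag 0)]
    simp
  | succ p ih =>
    let U' := U.submatrix (Fin.castSucc (n := p + 1)) Fin.castSucc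
    have hU' : U'.IsUpperTriangular := fun i j hij ↦ hU (Fin.castSucc_lt_castSucc_iff.2 hij)
    obtain ⟨f, hf_deg, hf⟩ := ih hU' fun i ↦ h_diag i.castSucc
    let s := X * f (Fin.last p) - ∑ i, f i * C (U i.castSucc (Fin.last _))
    have hs : s.natDegree ≤ p + 1 :=
      (natDegree_sub_le_of_le (natDegree_mul_le_of_le natDegree_X_le (hf_deg _))
        (natDegree_sum_le_of_forall_le _ _ fun i _ ↦
          (natDegree_mul_C_le _ _).trans ((hf_deg i).trans i.is_le))).trans (by simp [add_comm])
    refine ⟨Fin.snoc f (C (U (Fin.last _) (Fin.last _))⁻¹ * s), fun i ↦ ?_, ?_⟩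
    · cases i using Fin.lastCases with
      | last => simpa using (natDegree_C_mul_le _ _).trans hs
      | cast i => simpa using hf_deg i
    · ext1 j
      cases j using Fin.lastCases with
      | last =>
        rw [← Fin.succ_last, Fin.cons_succ]
        simp [vecMul, dotProduct, Fin.sum_univ_castSucc, mul_right_comm, ← C_mul, h_diag, s]
      | cast j =>
        have h_zero : U (Fin.last _) j.castSucc = 0 := hU (Fin.castSucc_lt_last j)
        have hj := congrFun hf j
        simp only [vecMul, dotProduct, Fin.sum_univ_castSucc, map_apply, h_zero] at hj ⊢
        cases j using Fin.cases <;> simpa [U', vecMul, dotProduct] using hj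

theorem coeff_ne_zero_and_coeff_mul_det_of_vecMul_eq_cons_one [Nontrivial R]
    {U : Matrix (Fin (p + 1)) (Fin (p + 1)) R} (hU : U.IsUpperTriangular)
    {f : Fin (p + 1) → R[X]} (hf_deg : ∀ i, (f i).natDegree ≤ i)
    (hf : f ᵥ* U.map C = Fin.cons 1 fun i ↦ X * f i.castSucc) :
    (∀ i, (f i).coeff i ≠ 0) ∧ (f (Fin.last p)).coeff p * U.det = 1 := by
  have h_coeff (j : Fin (p + 1)) : ((f ᵥ* U.map C) j).coeff j = (f j).coeff j * U j j :=
    coeff_vecMul_map_C_of_isUpperTriangular hU (d := 0) (by simpa using hf_deg) (by simp)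
  have h_zero : (f 0).coeff 0 * U 0 0 = 1 := by simpa [hf, eq_comm] using h_coeff 0
  have h_succ (i : Fin p) :
      (f i.castSucc).coeff i = (f i.succ).coeff (i + 1) * U i.succ i.succ := by
    simpa [hf] using h_coeff i.succ
  refine ⟨fun i ↦ ?_, ?_⟩
  · induction i using Fin.induction with
    | zero => exact left_ne_zero_of_mul (h_zero ▸ one_ne_zero)
    | succ i ih => exact left_ne_zero_of_mul (h_succ i ▸ ih)
  · have h_telescope :=
      mul_eq_mul_prod_of_castSucc_eq (a := fun i ↦ (f i).coeff i) (d := fun i ↦ U i i) h_succ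
    rw [det_of_isUpperTriangular hU]
    exact h_telescope.symm.trans h_zero

theorem exists_vecMul_map_C_eq {K : Type*} [Field K] {f : Fin n → K[X]}
    (hf_deg : ∀ i, (f i).natDegree ≤ i) (hf_lead : ∀ i, (f i).coeff i ≠ 0) {s : κ → K[X]}
    (hs : ∀ j, (s j).degree < n) : ∃ W : Matrix (Fin n) κ K, f ᵥ* W.map C = s := by
  let N : Matrix (Fin n) (Fin n) K := of fun m i ↦ (f i).coeff m
  have hN_upper : N.IsUpperTriangular := fun m i him ↦
    coeff_eq_zero_of_natDegree_lt ((hf_deg i).trans_lt him)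
  have hN : IsUnit N.det := by
    rw [det_of_isUpperTriangular hN_upper]
    exact (Finset.prod_ne_zero_iff.2 fun i _ ↦ hf_lead i).isUnit
  let S : Matrix (Fin n) κ K := of fun m j ↦ (s j).coeff m
  refine ⟨N⁻¹ * S, funext fun j ↦ ?_⟩
  ext m
  rw [coeff_vecMul_map_C]
  by_cases hm : m < n
  · have h_entry : (N * (N⁻¹ * S)) ⟨m, hm⟩ j = (s j).coeff m := by
      rw [mul_nonsing_inv_cancel_left _ _ hN]; rfl
    exact h_entry
  · rw [coeff_eq_zero_of_degree_lt ((hs j).trans_le (by simpa using hm))]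
    refine Fintype.sum_eq_zero _ fun i ↦ ?_
    rw [coeff_eq_zero_of_natDegree_lt ((hf_deg i).trans_lt (by omega)), zero_mul]

-- `divX` commutes with the recursion, so applying it to every entry of `g` gives a solution for
-- `divX t`, and we may induct on the degree bound `D`. The last conjunct says that `g j` has degree
-- less than `D + j - q`, without truncated subtraction.
theorem exists_castSucc_eq_divX_vecMul_of_degree_lt {U : Matrix (Fin (q + 1)) (Fin (q + 1)) R}
    (hU : U.IsUpperTriangular) {D : ℕ} {t : R[X]} (ht : t.degree < D) :
    ∃ g : Fin (q + 1) → R[X], g (Fin.last q) = t ∧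
      (∀ j : Fin q, g j.castSucc = divX ((g ᵥ* U.map C) j.succ)) ∧
      ∀ (j : Fin (q + 1)) (m : ℕ), D + j ≤ m + q → (g j).coeff m = 0 := by
  induction D generalizing t with
  | zero =>
    have ht_zero : t = 0 := degree_eq_bot.1 (Nat.WithBot.lt_zero_iff.1 ht)
    exact ⟨0, ht_zero.symm, fun j ↦ by simp, fun j m _ ↦ rfl⟩
  | succ D ih =>
    rw [degree_lt_iff_coeff_zero] at ht
    have h_divX_lt : (divX t).degree < D := by
      rw [degree_lt_iff_coeff_zero]
      exact fun m hm ↦ (coeff_divX ..).trans (ht _ (Nat.succ_le_succ hm))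
    obtain ⟨g, hg_last, hg, hg_coeff⟩ := ih h_divX_lt
    let g' : Fin (q + 1) → R[X] := Fin.snoc (fun j ↦ (g ᵥ* U.map C) j.succ) t
    have h_divX : (fun j ↦ divX (g' j)) = g := by
      ext1 j
      cases j using Fin.lastCases with
      | last => simp [g', hg_last]
      | cast j => simp [g', hg]
    refine ⟨g', Fin.snoc_last .., fun j ↦ ?_, fun j m hm ↦ ?_⟩
    · rw [divX_vecMul_map_C, h_divX]
      exact Fin.snoc_castSucc ..
    · cases j using Fin.lastCases with
      | last =>
        rw [Fin.val_last] at hm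
        simpa [g'] using ht m (by omega)
      | cast j =>
        rw [Fin.val_castSucc] at hm
        simp only [g', Fin.snoc_castSucc, coeff_vecMul_map_C]
        refine Fintype.sum_eq_zero _ fun i ↦ ?_
        rcases le_or_gt i j.succ with hij | hij
        · rw [hg_coeff i m (by have := Fin.le_def.1 hij; grind), zero_mul]
        · rw [show U i j.succ = 0 from hU hij, mul_zero]

theorem exists_castSucc_eq_divX_vecMul {U : Matrix (Fin (q + 1)) (Fin (q + 1)) R}
    (hU : U.IsUpperTriangular) {d : ℕ} {t : R[X]} (ht : t.degree < ↑(d + q + 1)) :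
    ∃ g : Fin (q + 1) → R[X], g (Fin.last q) = t ∧
      (∀ j : Fin q, g j.castSucc = divX ((g ᵥ* U.map C) j.succ)) ∧
      ∀ j, (g j).natDegree ≤ d + j := by
  obtain ⟨g, hg_last, hg, hg_coeff⟩ := exists_castSucc_eq_divX_vecMul_of_degree_lt hU ht
  exact ⟨g, hg_last, hg, fun j ↦ natDegree_le_iff_coeff_eq_zero.2 fun m hm ↦
    hg_coeff j m (by omega)⟩

theorem coeff_vecMul_zero_eq_mul_det {U : Matrix (Fin (q + 1)) (Fin (q + 1)) R}
    (hU : U.IsUpperTriangular) {d : ℕ} {g : Fin (q + 1) → R[X]}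
    (hg_deg : ∀ j, (g j).natDegree ≤ d + j)
    (hg : ∀ j : Fin q, g j.castSucc = divX ((g ᵥ* U.map C) j.succ)) :
    ((g ᵥ* U.map C) 0).coeff d = (g (Fin.last q)).coeff (d + q) * U.det := by
  have h_coeff (j : Fin (q + 1)) :
      ((g ᵥ* U.map C) j).coeff (d + j) = (g j).coeff (d + j) * U j j :=
    coeff_vecMul_map_C_of_isUpperTriangular hU hg_deg le_rfl
  have h_succ (j : Fin q) :
      (g j.castSucc).coeff (d + j) = (g j.succ).coeff (d + (j + 1)) * U j.succ j.succ := by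
    rw [hg, coeff_divX]
    exact h_coeff j.succ
  rw [det_of_isUpperTriangular hU]
  exact (h_coeff 0).trans
    (mul_eq_mul_prod_of_castSucc_eq (a := fun j ↦ (g j).coeff (d + j)) (d := fun j ↦ U j j) h_succ)

theorem degree_cons_sub_vecMul_lt {U : Matrix (Fin (q + 1)) (Fin (q + 1)) R} {f : R[X]}
    {g : Fin (q + 1) → R[X]} (hg : ∀ j : Fin q, g j.castSucc = divX ((g ᵥ* U.map C) j.succ))
    (hf_deg : f.natDegree ≤ p) (hg_deg : ((g ᵥ* U.map C) 0).natDegree ≤ p + 1)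
    (h_corner : f.coeff p = ((g ᵥ* U.map C) 0).coeff (p + 1)) (j : Fin (q + 1)) :
    (((Fin.cons (X * f) fun j ↦ X * g j.castSucc : Fin (q + 1) → R[X]) - g ᵥ* U.map C) j).degree <
      ↑(p + 1) := by
  rw [Pi.sub_apply]
  cases j using Fin.cases with
  | zero =>
    rw [Fin.cons_zero, degree_lt_iff_coeff_zero]
    intro m hm
    obtain rfl | hm := hm.eq_or_lt
    · rw [coeff_sub, coeff_X_mul, h_corner, sub_self]
    · obtain ⟨m, rfl⟩ := Nat.exists_eq_succ_of_ne_zero (Nat.ne_zero_of_lt hm)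
      rw [coeff_sub, coeff_X_mul, coeff_eq_zero_of_natDegree_lt (by omega),
        coeff_eq_zero_of_natDegree_lt (by omega), sub_zero]
  | succ j =>
    have h_const : X * divX ((g ᵥ* U.map C) j.succ) - (g ᵥ* U.map C) j.succ =
        -C (((g ᵥ* U.map C) j.succ).coeff 0) := by
      linear_combination X_mul_divX_add ((g ᵥ* U.map C) j.succ)
    rw [Fin.cons_succ, hg, h_const, ← C_neg]
    exact degree_C_le.trans_lt (by norm_cast; omega)

end TriangularPolynomialSystems

section BlockRotation

variable {p q : ℕ}

/-- The cyclic permutation of `Fin (p + 1) ⊕ Fin (q + 1)` that shifts each block up by one and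
sends the last index of either block to the first index of the other. Permuting the columns of a
block triangular matrix by it produces the companion-like shape to which cyclic matrices are
conjugate. -/
def blockRotate (p q : ℕ) : Equiv.Perm (Fin (p + 1) ⊕ Fin (q + 1)) where
  toFun := Sum.elim (Fin.lastCases (.inr 0) fun i ↦ .inl i.succ)
    (Fin.lastCases (.inl 0) fun j ↦ .inr j.succ)
  invFun := Sum.elim (Fin.cases (.inr (Fin.last q)) fun i ↦ .inl i.castSucc)
    (Fin.cases (.inl (Fin.last p)) fun j ↦ .inr j.castSucc)
  left_inv := by
    rintro (i | j)
    · cases i using Fin.lastCases <;> simp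
    · cases j using Fin.lastCases <;> simp
  right_inv := by
    rintro (i | j)
    · cases i using Fin.cases <;> simp
    · cases j using Fin.cases <;> simp

@[simp]
theorem blockRotate_inl_castSucc (i : Fin p) :
    blockRotate p q (.inl i.castSucc) = .inl i.succ := by
  simp [blockRotate]

@[simp]
theorem blockRotate_inl_last : blockRotate p q (.inl (Fin.last p)) = .inr 0 := by
  simp [blockRotate]

@[simp]
theorem blockRotate_inr_castSucc (j : Fin q) :
    blockRotate p q (.inr j.castSucc) = .inr j.succ := by
  simp [blockRotate]

@[simp]
theorem blockRotate_inr_last : blockRotate p q (.inr (Fin.last q)) = .inl 0 := by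
  simp [blockRotate]

theorem blockRotate_swap (x : Fin (q + 1) ⊕ Fin (p + 1)) :
    blockRotate p q x.swap = (blockRotate q p x).swap := by
  rcases x with i | j
  · cases i using Fin.lastCases <;> simp
  · cases j using Fin.lastCases <;> simp

variable {K : Type*} [Field K]

theorem exists_degree_lt_coeff_eq_and_dvd_one_sub_X_mul {b : K[X]} (hb : b.Monic) {n : ℕ}
    (hb_deg : b.natDegree = n + 1) (hb₀ : b.coeff 0 ≠ 0) :
    ∃ t : K[X], t.degree < ↑(n + 1) ∧ t.coeff n = -(b.coeff 0)⁻¹ ∧ b ∣ 1 - X * t := by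
  refine ⟨C (-(b.coeff 0)⁻¹) * divX b, ?_, ?_, C (b.coeff 0)⁻¹, ?_⟩
  · rw [degree_lt_iff_coeff_zero]
    intro m hm
    have h_zero : b.coeff (m + 1) = 0 := coeff_eq_zero_of_natDegree_lt (by omega)
    rw [coeff_C_mul, coeff_divX, h_zero, mul_zero]
  · rw [coeff_C_mul, coeff_divX, ← hb_deg, hb.coeff_natDegree, mul_one]
  · have h_inv : C (b.coeff 0)⁻¹ * C (b.coeff 0) = 1 := by rw [← C_mul, inv_mul_cancel₀ hb₀, C_1]
    rw [C_neg]
    linear_combination C (b.coeff 0)⁻¹ * X_mul_divX_add b - h_inv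

theorem exists_blockRotate_system {b : K[X]} (hb : b.Monic) (hb_deg : b.natDegree = p + q + 2)
    (hb₀ : b.coeff 0 ≠ 0) {U₁ : Matrix (Fin (p + 1)) (Fin (p + 1)) K}
    {U₂ : Matrix (Fin (q + 1)) (Fin (q + 1)) K} (hU₁ : U₁.IsUpperTriangular)
    (hU₂ : U₂.IsUpperTriangular) (hdet : U₁.det * U₂.det = -b.coeff 0) :
    ∃ (W : Matrix (Fin (p + 1)) (Fin (q + 1)) K) (f : Fin (p + 1) ⊕ Fin (q + 1) → K[X]),
      (f ᵥ* (fromBlocks U₁ W 0 U₂).map C) (.inl 0) = 1 ∧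
      ∀ j, b ∣ (f ᵥ* (fromBlocks U₁ W 0 U₂).map C) (blockRotate p q j) - X * f j := by
  have hU₁_det : U₁.det ≠ 0 := left_ne_zero_of_mul (hdet ▸ neg_ne_zero.2 hb₀)
  obtain ⟨f, hf_deg, hf⟩ := exists_vecMul_eq_cons_one hU₁ hU₁_det
  obtain ⟨hf_lead, hf_last⟩ :=
    coeff_ne_zero_and_coeff_mul_det_of_vecMul_eq_cons_one hU₁ hf_deg hf
  obtain ⟨t, ht_deg, ht_coeff, ht_dvd⟩ :=
    exists_degree_lt_coeff_eq_and_dvd_one_sub_X_mul hb hb_deg hb₀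
  obtain ⟨g, rfl, hg, hg_deg⟩ := exists_castSucc_eq_divX_vecMul hU₂ (d := p + 1)
    (ht_deg.trans_le (by norm_cast; omega))
  have h_corner : (f (Fin.last p)).coeff p = ((g ᵥ* U₂.map C) 0).coeff (p + 1) := by
    rw [coeff_vecMul_zero_eq_mul_det hU₂ hg_deg hg, show p + 1 + q = p + q + 1 by omega, ht_coeff]
    refine mul_right_cancel₀ hU₁_det ?_
    rw [hf_last, mul_assoc, mul_comm U₂.det, hdet, neg_mul_neg, inv_mul_cancel₀ hb₀]
  obtain ⟨W, hW⟩ := exists_vecMul_map_C_eq hf_deg hf_lead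
    (degree_cons_sub_vecMul_lt hg (hf_deg _) (natDegree_vecMul_map_C_le hU₂ hg_deg 0) h_corner)
  have h_system : Sum.elim f g ᵥ* (fromBlocks U₁ W 0 U₂).map C =
      Sum.elim (Fin.cons 1 fun i ↦ X * f i.castSucc)
        (Fin.cons (X * f (Fin.last p)) fun j ↦ X * g j.castSucc) := by
    rw [fromBlocks_map, vecMul_fromBlocks]
    simp [Function.comp_def, hf, hW, Matrix.map_zero]
  refine ⟨W, Sum.elim f g, by simp [h_system], ?_⟩
  rw [h_system]
  rintro (i | j)
  · cases i using Fin.lastCases <;> simp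
  · cases j using Fin.lastCases <;> simp [ht_dvd]

end BlockRotation

section CyclicMatrices

variable {K : Type*} [Field K]

theorem IsCyclicVector.isConj_submatrix {ι : Type*} [Fintype ι] [DecidableEq ι]
    {A U : Matrix ι ι K} {v : ι → K} (hv : IsCyclicVector A v) {f : ι → K[X]} {σ : ι → ι} {j₀ : ι}
    (h_one : (f ᵥ* U.map C) j₀ = 1)
    (h_dvd : ∀ j, A.charpoly ∣ (f ᵥ* U.map C) (σ j) - X * f j) : IsConj A (U.submatrix id σ) := by
  let Y : Matrix ι ι K := of fun i j ↦ (aeval A (f j) *ᵥ v) i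
  have h_aeval (j : ι) : aeval A ((f ᵥ* U.map C) j) *ᵥ v = fun i ↦ (Y * U) i j := by
    ext i
    simp only [vecMul, dotProduct, map_apply, mul_comm _ (C _), ← smul_eq_C_mul, map_sum, map_smul,
      sum_mulVec, smul_mulVec, Finset.sum_apply, Pi.smul_apply, smul_eq_mul, mul_apply, Y, of_apply,
      mul_comm (U _ _)]
  refine hv.isConj (Y := Y) (u := fun i ↦ U i j₀) ?_ ?_
  · ext i j
    obtain ⟨r, hr⟩ := h_dvd j
    have h_eq : aeval A ((f ᵥ* U.map C) (σ j)) = A * aeval A (f j) := by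
      simpa [aeval_self_charpoly, sub_eq_zero] using congrArg (aeval A) hr
    have h_entry := congrFun (h_aeval (σ j)) i
    rw [h_eq, ← mulVec_mulVec] at h_entry
    exact h_entry
  · have h_col := h_aeval j₀
    rw [h_one, map_one, one_mulVec] at h_col
    exact h_col.symm

variable {p q : ℕ}

-- The sign is that of `blockRotate p q`, a cycle of length `p + q + 2`.
theorem IsCyclicMat.exists_isConj_upper_submatrix_blockRotate
    {A : Matrix (Fin (p + 1) ⊕ Fin (q + 1)) (Fin (p + 1) ⊕ Fin (q + 1)) K} (hA : IsCyclicMat A)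
    (hA_det : A.det ≠ 0) {U₁ : Matrix (Fin (p + 1)) (Fin (p + 1)) K}
    {U₂ : Matrix (Fin (q + 1)) (Fin (q + 1)) K} (hU₁ : U₁.IsUpperTriangular)
    (hU₂ : U₂.IsUpperTriangular) (hdet : U₁.det * U₂.det = (-1) ^ (p + q + 1) * A.det) :
    ∃ W, IsConj A ((fromBlocks U₁ W 0 U₂).submatrix id (blockRotate p q)) := by
  have h_card : Fintype.card (Fin (p + 1) ⊕ Fin (q + 1)) = p + q + 2 := by
    simp only [Fintype.card_sum, Fintype.card_fin]
    omega
  have h_coeff : A.charpoly.coeff 0 = (-1) ^ (p + q + 2) * A.det := by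
    rw [det_eq_sign_charpoly_coeff, h_card, ← mul_assoc, ← mul_pow, neg_one_mul, neg_neg, one_pow,
      one_mul]
  obtain ⟨W, f, h_one, h_dvd⟩ := exists_blockRotate_system A.charpoly_monic
    (by rw [charpoly_natDegree_eq_dim, h_card]) (by simpa [h_coeff] using hA_det) hU₁ hU₂
    (by rw [hdet, h_coeff]; ring)
  obtain ⟨v, hv⟩ := hA.exists_isCyclicVector
  exact ⟨W, hv.isConj_submatrix h_one h_dvd⟩

theorem IsCyclicMat.exists_isConj_lower_submatrix_blockRotate
    {B : Matrix (Fin (p + 1) ⊕ Fin (q + 1)) (Fin (p + 1) ⊕ Fin (q + 1)) K} (hB : IsCyclicMat B)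
    (hB_det : B.det ≠ 0) {L₁ : Matrix (Fin (p + 1)) (Fin (p + 1)) K}
    {L₂ : Matrix (Fin (q + 1)) (Fin (q + 1)) K} (hL₁ : L₁.IsLowerTriangular)
    (hL₂ : L₂.IsLowerTriangular) (hdet : L₁.det * L₂.det = (-1) ^ (p + q + 1) * B.det) :
    ∃ W, IsConj B ((fromBlocks L₁ W 0 L₂).submatrix (blockRotate p q) id) := by
  let swap := Equiv.sumComm (Fin (p + 1)) (Fin (q + 1))
  obtain ⟨W, hW⟩ := (hB.transpose.reindex swap).exists_isConj_upper_submatrix_blockRotate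
    (by rwa [det_reindex_self, det_transpose]) hL₂.transpose hL₁.transpose
    (by rw [det_transpose, det_transpose, det_reindex_self, det_transpose, mul_comm, hdet,
      add_comm p])
  refine ⟨Wᵀ, ?_⟩
  have h := isConj_transpose ((reindexAlgEquiv K K swap.symm).toMonoidHom.map_isConj hW)
  convert h using 1
  · ext i j
    simp [swap]
  · ext i j
    change _ = fromBlocks L₂ᵀ W 0 L₁ᵀ j.swap (blockRotate q p i.swap)
    rw [blockRotate_swap, submatrix_apply, id_eq]
    rcases blockRotate p q i with i | i <;> rcases j with j | j <;> rfl

theorem IsCyclicMat.exists_isConj_mul_eq_fromBlocks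
    {A B : Matrix (Fin (p + 1) ⊕ Fin (q + 1)) (Fin (p + 1) ⊕ Fin (q + 1)) K}
    (hA : IsCyclicMat A) (hB : IsCyclicMat B)
    {P₁ : Matrix (Fin (p + 1)) (Fin (p + 1)) K} {P₂ : Matrix (Fin (q + 1)) (Fin (q + 1)) K}
    (hP₁ : IsUnit P₁.det) (hP₂ : IsUnit P₂.det) (hdet : P₁.det * P₂.det = A.det * B.det) :
    ∃ C A' B', IsConj A A' ∧ IsConj B B' ∧ A' * B' = fromBlocks P₁ C 0 P₂ := by
  have hAB_det : A.det * B.det ≠ 0 := hdet ▸ (hP₁.mul hP₂).ne_zero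
  have h_sign : ((-1 : K) ^ (p + q + 1)) * (-1) ^ (p + q + 1) = 1 := by
    rw [← mul_pow, neg_one_mul, neg_neg, one_pow]
  obtain ⟨U₁, L₁, U₂, L₂, hU₁, hL₁, hU₂, hL₂, hU_det, hL_det, h₁, h₂⟩ :=
    exists_isConj_upper_mul_lower_pair_det_eq hP₁ hP₂
      (a := (-1) ^ (p + q + 1) * A.det) (b := (-1) ^ (p + q + 1) * B.det)
      (by rw [hdet, mul_mul_mul_comm, h_sign, one_mul])
  obtain ⟨V, hV⟩ := hA.exists_isConj_upper_submatrix_blockRotate (left_ne_zero_of_mul hAB_det)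
    hU₁ hU₂ hU_det
  obtain ⟨W, hW⟩ := hB.exists_isConj_lower_submatrix_blockRotate (right_ne_zero_of_mul hAB_det)
    hL₁ hL₂ hL_det
  obtain ⟨C, hC⟩ := exists_isConj_fromBlocks h₁ h₂ (U₁ * W + V * L₂)
  have h_mul : (fromBlocks U₁ V 0 U₂).submatrix id (blockRotate p q) *
      (fromBlocks L₁ W 0 L₂).submatrix (blockRotate p q) id =
      fromBlocks (U₁ * L₁) (U₁ * W + V * L₂) 0 (U₂ * L₂) := by
    rw [submatrix_mul_equiv, submatrix_id_id, fromBlocks_multiply]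
    simp
  obtain ⟨A', B', hA', hB', hAB⟩ := exists_isConj_mul_eq_of_isConj_mul (h_mul ▸ hC)
  exact ⟨C, A', B', hV.trans hA', hW.trans hB', hAB⟩

end CyclicMatrices

theorem product_of_cyclic_classes_contains_block_triangular {K : Type*} [Field K]
    {n m : ℕ} (hn : 2 ≤ n) (hm : 1 ≤ m) (hmn : m ≤ n - 1)
    (A B : Matrix (Fin m ⊕ Fin (n - m)) (Fin m ⊕ Fin (n - m)) K)
    (hA : IsUnit A.det) (hB : IsUnit B.det)
    (hcA : IsCyclicMat A) (hcB : IsCyclicMat B)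
    (P₁ : Matrix (Fin m) (Fin m) K) (P₂ : Matrix (Fin (n - m)) (Fin (n - m)) K)
    (hP₁ : IsUnit P₁.det) (hP₂ : IsUnit P₂.det)
    (hdet : P₁.det * P₂.det = A.det * B.det) :
    ∃ (C : Matrix (Fin m) (Fin (n - m)) K)
      (X Y : Matrix (Fin m ⊕ Fin (n - m)) (Fin m ⊕ Fin (n - m)) K),
      IsUnit X.det ∧ IsUnit Y.det ∧
      Matrix.fromBlocks P₁ C 0 P₂ = (X * A * X⁻¹) * (Y * B * Y⁻¹) := by
  obtain ⟨q, hq⟩ : ∃ q, n - m = q + 1 := ⟨n - m - 1, by omega⟩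
  obtain ⟨p, rfl⟩ : ∃ p, m = p + 1 := ⟨m - 1, by omega⟩
  generalize n - (p + 1) = l at *
  subst hq
  obtain ⟨C, A', B', hA', hB', hAB⟩ := hcA.exists_isConj_mul_eq_fromBlocks hcB hP₁ hP₂ hdet
  obtain ⟨X, hX, rfl⟩ := exists_isUnit_det_conj_eq_of_isConj hA'
  obtain ⟨Y, hY, rfl⟩ := exists_isUnit_det_conj_eq_of_isConj hB'
  exact ⟨C, X, Y, hX, hY, hAB.symm⟩
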